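/- arXiv:2109.14718 — 4 statements merged into one kernel-verified Lean document; each statement's English description precedes it below -/
import Mathlib

section
/- (Paper's Lemma 2.) Let α be a type of atomic propositions and let (ŝ_i)_{i∈I} = ((s_i⁺, s_i⁻))_{i∈I} be a family of partial states over α with I nonempty and each partial state consistent (s_i⁺ ∩ s_i⁻ = ∅). If an atomic proposition p is not in the collapsed set, i.e., p ∉ (⋂_{i∈I} s_i⁺) ∪ (⋂_{i∈I} s_i⁻), then both p and ¬p are consistent with the DNF: there exist valuations v, w : α → Bool, each satisfying the DNF, such that v p = true and w p = false. -/
/-- A valuation `v` satisfies the partial state `(s⁺, s⁻)` if every atom in `s⁺`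
is true under `v` and every atom in `s⁻` is false under `v`. -/
def Satisfies {α : Type*} (v : α → Bool) (s : Set α × Set α) : Prop :=
  (∀ p ∈ s.1, v p = true) ∧ (∀ q ∈ s.2, v q = false)

theorem stmt_7 {α : Type*} {I : Type*} [Nonempty I] (sp sn : I → Set α)
    (hcons : ∀ i, sp i ∩ sn i = ∅) (p : α)
    (hp : p ∉ (⋂ i, sp i) ∪ (⋂ i, sn i)) :
    (∃ v : α → Bool, (∃ i, Satisfies v (sp i, sn i)) ∧ v p = true) ∧
    (∃ w : α → Bool, (∃ i, Satisfies w (sp i, sn i)) ∧ w p = false) := by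
  classical
  simp only [Set.mem_union, Set.mem_iInter, not_or, not_forall] at hp
  obtain ⟨⟨i, hi⟩, ⟨j, hj⟩⟩ := hp
  refine ⟨⟨fun q => decide (q ∉ sn j), ⟨j, ?_, ?_⟩, ?_⟩,
    ⟨fun q => decide (q ∈ sp i), ⟨i, ?_, ?_⟩, ?_⟩⟩
  · intro q hq
    exact decide_eq_true (fun h => Set.notMem_empty q (hcons j ▸ ⟨hq, h⟩))
  · intro q hq
    exact decide_eq_false (fun h => h hq)
  · exact decide_eq_true hj
  · intro q hq
    exact decide_eq_true hq
  · intro q hq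
    exact decide_eq_false (fun h => Set.notMem_empty q (hcons i ▸ ⟨h, hq⟩))
  · exact decide_eq_false hi
end

section
/- (Converse direction of the paper's Lemma 2, as used in Theorem 1.) Let α be a type of atomic propositions and let (ŝ_i)_{i∈I} = ((s_i⁺, s_i⁻))_{i∈I} be a family of partial states over α with I nonempty and each partial state consistent (s_i⁺ ∩ s_i⁻ = ∅). If an atomic proposition p is determined by the DNF — that is, if every valuation v satisfying the DNF has v p = true, or every valuation v satisfying the DNF has v p = false — then p ∈ (⋂_{i∈I} s_i⁺) ∪ (⋂_{i∈I} s_i⁻). More precisely: if every satisfying valuation has v p = true then p ∈ ⋂_{i∈I} s_i⁺, and if every satisfying valuation has v p = false then p ∈ ⋂_{i∈I} s_i⁻. -/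
theorem stmt_8 {α : Type*} {I : Type*} [Nonempty I] (sp sn : I → Set α)
    (hcons : ∀ i, sp i ∩ sn i = ∅) (p : α) :
    ((∀ v : α → Bool, (∃ i, Satisfies v (sp i, sn i)) → v p = true) →
      p ∈ ⋂ i, sp i) ∧
    ((∀ v : α → Bool, (∃ i, Satisfies v (sp i, sn i)) → v p = false) →
      p ∈ ⋂ i, sn i) := by
  classical
  have hd : ∀ i q, q ∈ sp i → q ∈ sn i → False := by
    intro i q h1 h2
    have h : q ∈ sp i ∩ sn i := ⟨h1, h2⟩
    rw [hcons i] at h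
    exact h
  constructor
  · intro h
    refine Set.mem_iInter.2 fun i => ?_
    have := h (fun q => decide (q ∈ sp i))
      ⟨i, fun q hq => decide_eq_true hq, fun q hq => decide_eq_false fun h' => hd i q h' hq⟩
    exact of_decide_eq_true this
  · intro h
    refine Set.mem_iInter.2 fun i => ?_
    have := h (fun q => decide (q ∉ sn i))
      ⟨i, fun q hq => decide_eq_true fun h' => hd i q hq h',
        fun q hq => decide_eq_false fun h' => h' hq⟩
    exact not_not.1 (of_decide_eq_false this)
end

section
/- (Paper's Theorem 1: the collapsed DNF is the largest set of propositions fully determined by the DNF.) Let α be a type of atomic propositions and let (ŝ_i)_{i∈I} = ((s_i⁺, s_i⁻))_{i∈I} be a family of partial states over α with I nonempty and each partial state consistent (s_i⁺ ∩ s_i⁻ = ∅). Then the set of atomic propositions whose truth value is fully determined by the DNF equals the collapsed set: { p : α | ∀ valuations v, w : α → Bool, if v satisfies the DNF and w satisfies the DNF then v p = w p } = (⋂_{i∈I} s_i⁺) ∪ (⋂_{i∈I} s_i⁻). In particular, every proposition in the collapsed DNF has its value fixed by the DNF, and for every proposition outside the collapsed DNF there exist satisfying valuations assigning it opposite values. 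-/
theorem stmt_9 {α : Type*} {I : Type*} [Nonempty I] (sp sn : I → Set α)
    (hcons : ∀ i, sp i ∩ sn i = ∅) :
    {p : α | ∀ v w : α → Bool,
        (∃ i, Satisfies v (sp i, sn i)) → (∃ i, Satisfies w (sp i, sn i)) →
        v p = w p}
      = (⋂ i, sp i) ∪ (⋂ i, sn i) := by 
  classical
  have hd : ∀ i q, q ∈ sp i → q ∈ sn i → False := fun i q h1 h2 => by
    have h : q ∈ sp i ∩ sn i := ⟨h1, h2⟩
    rw [hcons i] at h
    exact h
  ext p
  simp only [Set.mem_setOf_eq, Set.mem_union, Set.mem_iInter]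
  constructor
  · intro h
    by_contra hc
    rw [not_or, not_forall, not_forall] at hc
    obtain ⟨⟨i, hi⟩, ⟨j, hj⟩⟩ := hc
    have := h (fun q => decide (q ∈ sp i)) (fun q => decide (q ∉ sn j))
      ⟨i, fun q hq => decide_eq_true hq, fun q hq => decide_eq_false fun h' => hd i q h' hq⟩
      ⟨j, fun q hq => decide_eq_true fun h' => hd j q hq h',
        fun q hq => decide_eq_false fun h' => h' hq⟩
    simp [hi, hj] at this
  · rintro (h | h) v w ⟨i, hv⟩ ⟨j, hw⟩
    · rw [hv.1 p (h i), hw.1 p (h j)]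
    · rw [hv.2 p (h i), hw.2 p (h j)]
end

section
/- ('Largest' formulation of the paper's Theorem 1.) Let α be a type of atomic propositions and let (ŝ_i)_{i∈I} = ((s_i⁺, s_i⁻))_{i∈I} be a family of partial states over α with I nonempty and each partial state consistent (s_i⁺ ∩ s_i⁻ = ∅). Let T be any set of atomic propositions such that every p ∈ T is fully determined by the DNF (all valuations satisfying the DNF agree on the value of p). Then T ⊆ (⋂_{i∈I} s_i⁺) ∪ (⋂_{i∈I} s_i⁻); that is, the collapsed set contains every set of propositions fully determined by the DNF. -/
theorem stmt_10 {α : Type*} {I : Type*} [Nonempty I] (sp sn : I → Set α)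
    (hcons : ∀ i, sp i ∩ sn i = ∅) (T : Set α)
    (hT : ∀ p ∈ T, ∀ v w : α → Bool,
        (∃ i, Satisfies v (sp i, sn i)) → (∃ i, Satisfies w (sp i, sn i)) →
        v p = w p) :
    T ⊆ (⋂ i, sp i) ∪ (⋂ i, sn i) := by
  classical
  intro p hp
  by_contra h
  simp only [Set.mem_union, Set.mem_iInter, not_or, not_forall] at h
  obtain ⟨⟨i, hi⟩, ⟨j, hj⟩⟩ := h
  have hd : ∀ k q, q ∈ sp k → q ∈ sn k → False := fun k q h1 h2 => by
    have h3 : q ∈ sp k ∩ sn k := ⟨h1, h2⟩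
    rw [hcons k] at h3
    exact h3
  have key := hT p hp (fun q => decide (q ∈ sp i)) (fun q => decide (q ∉ sn j))
    ⟨i, fun q hq => decide_eq_true hq, fun q hq => decide_eq_false fun h1 => hd i q h1 hq⟩
    ⟨j, fun q hq => decide_eq_true fun h1 => hd j q hq h1,
      fun q hq => decide_eq_false fun h1 => h1 hq⟩
  simp [hi, hj] at key
end
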